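/- There exists a constant c < 1 such that for every ε > 0 there exists N with f_125(n) ≤ c · (1 + ε) · C(n, 62) for all n ≥ N, where C(n, k) denotes the binomial coefficient. -/

import Mathlib

/-- A complete `r`-partite `r`-graph (a "block") on a finite vertex set `V ⊆ ℕ`:
it is determined by `r` pairwise disjoint nonempty subsets of `V`. -/
structure Block (V : Finset ℕ) (r : ℕ) where
  parts : Fin r → Finset ℕ
  nonempty : ∀ i, (parts i).Nonempty
  subset : ∀ i, parts i ⊆ V
  disj : ∀ i j, i ≠ j → Disjoint (parts i) (parts j)

/-- The edge set of a block: all sets contained in the union of the parts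
meeting each part in exactly one vertex. -/
def Block.edges {V : Finset ℕ} {r : ℕ} (B : Block V r) : Set (Finset ℕ) :=
  {X | (∀ i, (X ∩ B.parts i).card = 1) ∧ ∀ x ∈ X, ∃ i, x ∈ B.parts i}

/-- `ExactCover V r k F` : there are `k` complete `r`-partite `r`-graphs on `V`
whose edge sets are pairwise disjoint and whose union is the family `F`. -/
def ExactCover (V : Finset ℕ) (r k : ℕ) (F : Set (Finset ℕ)) : Prop :=
  ∃ B : Fin k → Block V r,
    (∀ i j, i ≠ j → Disjoint (B i).edges (B j).edges) ∧
    (⋃ i, (B i).edges) = F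

/-- `f r n` : the minimum number of complete `r`-partite `r`-graphs needed to
partition the edge set of the complete `r`-uniform hypergraph on `[n]`. -/
noncomputable def f (r n : ℕ) : ℕ :=
  sInf {k | ExactCover (Finset.range n) r k
    {X | X ⊆ Finset.range n ∧ X.card = r}}

/-!
Cut `[n]` into two halves of size `m`. A set of size `2d + 1` has an odd trace on exactly one of
them, so `f_{2d+1}(2m) ≤ 2 ∑_{i+j=d} f_{2i+1}(m) f_{2j}(m)`. For the odd factor the classical bound
`f_{2i+1}(m) ≤ C(m, i)`, obtained by classifying sets by their second largest element, is enough.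

The even factor can be improved by `(14/15)^⌊j/2⌋`. Cut the `m` points into a fixed large number of
equal parts and classify the `2j`-sets by their type, the sizes of their traces on the parts. Types
with an odd entry contribute a lower power of the part size, and almost all of the remaining types
consist of `j` twos. In such a type the parts are matched up: `K₄ × K₆` splits into
`14 < 3 · 5` products of bicliques (Leader, Milićević, Tan), and blowing up this partition covers
the products of a pair in one part and a pair in another by `14/15` of the usual number of blocks.

Altogether `f_{2d+1}(n) ≤ (γ + o(1)) C(n, d)`, where `γ` is twice the average of
`(14/15)^⌊|S|/2⌋` over the subsets `S` of a `d`-set, and `γ < 1` as soon as `d ≥ 42`.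
-/

open Finset

section Blocks

variable {α β ι : Type*} [DecidableEq α] [DecidableEq β]

/-- The edge set of the complete multipartite hypergraph with parts `P i`. Empty parts are allowed;
they make the edge set empty. -/
def transversals (P : ι → Finset α) : Set (Finset α) :=
  {X | (∀ i, #(X ∩ P i) = 1) ∧ ∀ x ∈ X, ∃ i, x ∈ P i}

/-- `E` is the edge set of a complete `r`-partite `r`-graph on `V`, possibly with empty parts. -/
def IsBlock (V : Finset α) (r : ℕ) (E : Set (Finset α)) : Prop :=
  ∃ P : Fin r → Finset α,
    (∀ i, P i ⊆ V) ∧ Pairwise (fun i j ↦ Disjoint (P i) (P j)) ∧ E = transversals P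

/-- The family of all `r`-element subsets of `V`. -/
def layer (V : Finset α) (r : ℕ) : Set (Finset α) :=
  {X | X ⊆ V ∧ #X = r}

/-- The product of a family on `V` and a family on `W`: the subsets of `V ∪ W` whose traces on `V`
and on `W` belong to the two families. -/
def joinFam (V W : Finset α) (F G : Set (Finset α)) : Set (Finset α) :=
  {X | X ⊆ V ∪ W ∧ X ∩ V ∈ F ∧ X ∩ W ∈ G}

/-- The blow-up of the family `F` along `π`: the subsets of `U` which `π` maps injectively onto a
member of `F`. -/
def pullbackFam (π : β → α) (U : Finset β) (F : Set (Finset α)) : Set (Finset β) :=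
  {X | X ⊆ U ∧ Set.InjOn π X ∧ X.image π ∈ F}

theorem isBlock_transversals [Fintype ι] {V : Finset α} {P : ι → Finset α} (hV : ∀ i, P i ⊆ V)
    (hP : Pairwise fun i j ↦ Disjoint (P i) (P j)) :
    IsBlock V (Fintype.card ι) (transversals P) := by
  let e := Fintype.equivFin ι
  refine ⟨P ∘ e.symm, fun i ↦ hV _, fun i j hij ↦ hP (e.symm.injective.ne hij), ?_⟩
  ext X
  simp only [transversals, Set.mem_ofPred_eq, Function.comp_apply]
  exact and_congr e.symm.forall_congr_right.symm
    (forall₂_congr fun x _ ↦ e.symm.exists_congr_right.symm)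

theorem isBlock_singleton {V X : Finset α} (hX : X ⊆ V) : IsBlock V #X {X} := by
  have hblock := isBlock_transversals (V := V) (P := fun x : X ↦ {x.1})
    (fun x ↦ singleton_subset_iff.2 (hX x.2))
    fun x y hxy ↦ disjoint_singleton.2 (Subtype.coe_ne_coe.2 hxy)
  rw [Fintype.card_coe] at hblock
  convert hblock using 1
  ext Y
  have hcard (x : α) : #(Y ∩ {x}) = 1 ↔ x ∈ Y := by
    by_cases hx : x ∈ Y <;> simp [hx]
  simp only [transversals, hcard, Set.mem_singleton_iff, Set.mem_ofPred_eq, mem_singleton,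
    Subtype.forall, Subtype.exists, exists_prop, exists_eq_right']
  exact ⟨by rintro rfl; simp, fun h ↦ Subset.antisymm h.2 h.1⟩

theorem isBlock_layer_one (V : Finset α) : IsBlock V 1 (layer V 1) := by
  have hblock := isBlock_transversals (V := V) (P := fun _ : Unit ↦ V) (fun _ ↦ Subset.rfl)
    fun i j hij ↦ absurd rfl hij
  rw [Fintype.card_unit] at hblock
  convert hblock using 1
  ext X
  simp only [layer, transversals, Set.mem_ofPred_eq, forall_const, exists_const]
  exact ⟨fun h ↦ ⟨by rw [inter_eq_left.2 h.1, h.2], h.1⟩,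
    fun h ↦ ⟨h.2, by rw [← h.1, inter_eq_left.2 h.2]⟩⟩

theorem IsBlock.mono {V W : Finset α} {r : ℕ} {E : Set (Finset α)} (h : IsBlock V r E)
    (hVW : V ⊆ W) : IsBlock W r E := by
  obtain ⟨P, hPV, hP, rfl⟩ := h
  exact ⟨P, fun i ↦ (hPV i).trans hVW, hP, rfl⟩

theorem joinFam_transversals {κ : Type*} {V W : Finset α} (hVW : Disjoint V W) {P : ι → Finset α}
    {Q : κ → Finset α} (hP : ∀ i, P i ⊆ V) (hQ : ∀ i, Q i ⊆ W) :
    joinFam V W (transversals P) (transversals Q) = transversals (Sum.elim P Q) := by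
  ext X
  have hXP (i : ι) : X ∩ V ∩ P i = X ∩ P i := by rw [inter_assoc, inter_eq_right.2 (hP i)]
  have hXQ (i : κ) : X ∩ W ∩ Q i = X ∩ Q i := by rw [inter_assoc, inter_eq_right.2 (hQ i)]
  have hVQ {x : α} (hx : x ∈ V) : ¬∃ i, x ∈ Q i :=
    fun ⟨i, hi⟩ ↦ disjoint_left.1 hVW hx (hQ i hi)
  have hWP {x : α} (hx : x ∈ W) : ¬∃ i, x ∈ P i :=
    fun ⟨i, hi⟩ ↦ disjoint_left.1 hVW (hP i hi) hx
  simp only [joinFam, transversals, Set.mem_ofPred_eq, hXP, hXQ, Sum.forall, Sum.exists,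
    Sum.elim_inl, Sum.elim_inr, mem_inter]
  constructor
  · rintro ⟨hX, ⟨hcP, hV⟩, hcQ, hW⟩
    refine ⟨⟨hcP, hcQ⟩, fun x hx ↦ ?_⟩
    exact (mem_union.1 (hX hx)).imp (fun h ↦ hV x ⟨hx, h⟩) fun h ↦ hW x ⟨hx, h⟩
  · rintro ⟨⟨hcP, hcQ⟩, hX⟩
    refine ⟨fun x hx ↦ mem_union.2 ?_, ⟨hcP, fun x hx ↦ (hX x hx.1).resolve_right (hVQ hx.2)⟩,
      hcQ, fun x hx ↦ (hX x hx.1).resolve_left (hWP hx.2)⟩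
    exact (hX x hx).imp (fun ⟨i, hi⟩ ↦ hP i hi) fun ⟨i, hi⟩ ↦ hQ i hi

theorem IsBlock.join {V W : Finset α} {r s : ℕ} {E F : Set (Finset α)} (hVW : Disjoint V W)
    (hE : IsBlock V r E) (hF : IsBlock W s F) : IsBlock (V ∪ W) (r + s) (joinFam V W E F) := by
  obtain ⟨P, hPV, hP, rfl⟩ := hE
  obtain ⟨Q, hQW, hQ, rfl⟩ := hF
  have hPQ (i j) : Disjoint (P i) (Q j) := hVW.mono (hPV i) (hQW j)
  have hblock := isBlock_transversals (V := V ∪ W) (P := Sum.elim P Q)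
    (Sum.forall.2 ⟨fun i ↦ (hPV i).trans subset_union_left,
      fun i ↦ (hQW i).trans subset_union_right⟩) <| by
    rintro (i | i) (j | j) hij
    · exact hP fun h ↦ hij (congrArg _ h)
    · exact hPQ i j
    · exact (hPQ j i).symm
    · exact hQ fun h ↦ hij (congrArg _ h)
  rwa [Fintype.card_sum, Fintype.card_fin, Fintype.card_fin,
    ← joinFam_transversals hVW hPV hQW] at hblock

theorem IsBlock.pullback {V : Finset α} {r : ℕ} {E : Set (Finset α)} (hE : IsBlock V r E)
    (π : β → α) (U : Finset β) : IsBlock U r (pullbackFam π U E) := by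
  obtain ⟨P, -, hP, rfl⟩ := hE
  refine ⟨fun i ↦ {x ∈ U | π x ∈ P i}, fun i ↦ filter_subset _ _,
    fun i j hij ↦ disjoint_filter.2 fun x _ hi hj ↦ disjoint_left.1 (hP hij) hi hj, ?_⟩
  ext X
  have himage (hX : X ⊆ U) (i : Fin r) :
      X.image π ∩ P i = (X ∩ {x ∈ U | π x ∈ P i}).image π := by
    ext y
    simp only [mem_inter, mem_image, mem_filter]
    constructor
    · rintro ⟨⟨x, hx, rfl⟩, hy⟩
      exact ⟨x, ⟨hx, hX hx, hy⟩, rfl⟩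
    · rintro ⟨x, ⟨hx, -, hy⟩, rfl⟩
      exact ⟨⟨x, hx, rfl⟩, hy⟩
  constructor
  · rintro ⟨hX, hπ, hcard, hcover⟩
    refine ⟨fun i ↦ ?_, fun x hx ↦ ?_⟩
    · rw [← hcard i, himage hX, card_image_of_injOn (hπ.mono inter_subset_left)]
    · obtain ⟨i, hi⟩ := hcover _ (mem_image_of_mem π hx)
      exact ⟨i, mem_filter.2 ⟨hX hx, hi⟩⟩
  · rintro ⟨hcard, hcover⟩
    have hX : X ⊆ U := fun x hx ↦ (mem_filter.1 (hcover x hx).choose_spec).1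
    have hπ : Set.InjOn π X := by
      intro x hx y hy hxy
      obtain ⟨i, hi⟩ := hcover x hx
      have hyi : y ∈ U.filter (π · ∈ P i) := mem_filter.2 ⟨hX hy, hxy ▸ (mem_filter.1 hi).2⟩
      exact card_le_one.1 (hcard i).le x (mem_inter.2 ⟨hx, hi⟩) y (mem_inter.2 ⟨hy, hyi⟩)
    refine ⟨hX, hπ, fun i ↦ ?_, forall_mem_image.2 fun x hx ↦ ?_⟩
    · rw [himage hX, card_image_of_injOn (hπ.mono inter_subset_left), hcard]
    · obtain ⟨i, hi⟩ := hcover x hx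
      exact ⟨i, (mem_filter.1 hi).2⟩

end Blocks

section Partitions

variable {α β ι : Type*} [DecidableEq α] [DecidableEq β]

/-- The family `F` is partitioned by at most `k` complete `r`-partite `r`-graphs on `V`. -/
def HasPartition (V : Finset α) (r : ℕ) (F : Set (Finset α)) (k : ℕ) : Prop :=
  ∃ 𝓔 : Finset (Set (Finset α)), #𝓔 ≤ k ∧ (∀ E ∈ 𝓔, IsBlock V r E) ∧ (∀ E ∈ 𝓔, E ⊆ F) ∧
    ∀ X ∈ F, ∃! E, E ∈ 𝓔 ∧ X ∈ E

theorem hasPartition_empty (V : Finset α) (r k : ℕ) : HasPartition V r ∅ k :=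
  ⟨∅, by simp, by simp, by simp, by simp⟩

theorem IsBlock.hasPartition {V : Finset α} {r : ℕ} {E : Set (Finset α)} (h : IsBlock V r E) :
    HasPartition V r E 1 := by
  refine ⟨{E}, by simp, by simpa, by simp, fun X hX ↦ ⟨E, by simpa, ?_⟩⟩
  rintro E' ⟨hE', -⟩
  exact mem_singleton.1 hE'

namespace HasPartition

variable {V W : Finset α} {r s k l : ℕ} {F G : Set (Finset α)}

theorem mono_card (h : HasPartition V r F k) (hkl : k ≤ l) : HasPartition V r F l := by
  obtain ⟨𝓔, hcard, h⟩ := h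
  exact ⟨𝓔, hcard.trans hkl, h⟩

theorem union (hFG : Disjoint F G) (hF : HasPartition V r F k) (hG : HasPartition V r G l) :
    HasPartition V r (F ∪ G) (k + l) := by
  classical
  obtain ⟨𝓔, hcard, hblock, hsub, huniq⟩ := hF
  obtain ⟨𝓔', hcard', hblock', hsub', huniq'⟩ := hG
  refine ⟨𝓔 ∪ 𝓔', (card_union_le _ _).trans (add_le_add hcard hcard'),
    fun E hE ↦ (mem_union.1 hE).elim (hblock E) (hblock' E),
    fun E hE ↦ (mem_union.1 hE).elim (fun h ↦ (hsub E h).trans Set.subset_union_left)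
      fun h ↦ (hsub' E h).trans Set.subset_union_right, ?_⟩
  rintro X (hX | hX)
  · obtain ⟨E, ⟨hE, hXE⟩, hE_uniq⟩ := huniq X hX
    refine ⟨E, ⟨mem_union_left _ hE, hXE⟩, fun E' ⟨hE', hXE'⟩ ↦ ?_⟩
    refine (mem_union.1 hE').elim (fun h ↦ hE_uniq E' ⟨h, hXE'⟩) fun h ↦ ?_
    exact (Set.disjoint_left.1 hFG hX (hsub' E' h hXE')).elim
  · obtain ⟨E, ⟨hE, hXE⟩, hE_uniq⟩ := huniq' X hX
    refine ⟨E, ⟨mem_union_right _ hE, hXE⟩, fun E' ⟨hE', hXE'⟩ ↦ ?_⟩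
    refine (mem_union.1 hE').elim (fun h ↦ ?_) fun h ↦ hE_uniq E' ⟨h, hXE'⟩
    exact (Set.disjoint_left.1 hFG (hsub E' h hXE') hX).elim

theorem biUnion {s : Finset ι} {F : ι → Set (Finset α)} {k : ι → ℕ}
    (hF : (s : Set ι).PairwiseDisjoint F) (h : ∀ i ∈ s, HasPartition V r (F i) (k i)) :
    HasPartition V r (⋃ i ∈ s, F i) (∑ i ∈ s, k i) := by
  classical
  induction s using Finset.induction_on with
  | empty => simpa using hasPartition_empty V r 0
  | insert a s ha ih =>
    rw [set_biUnion_insert, sum_insert ha]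
    rw [coe_insert] at hF
    refine union ?_ (h a (mem_insert_self a s))
      (ih (hF.subset (Set.subset_insert _ _)) fun i hi ↦ h i (mem_insert_of_mem hi))
    refine Set.disjoint_iUnion₂_right.2 fun i hi ↦
      hF (Set.mem_insert _ _) (Set.mem_insert_of_mem _ hi) ?_
    rintro rfl
    exact ha hi

theorem join (hVW : Disjoint V W) (hF : HasPartition V r F k) (hG : HasPartition W s G l) :
    HasPartition (V ∪ W) (r + s) (joinFam V W F G) (k * l) := by
  classical
  obtain ⟨𝓔, hcard, hblock, hsub, huniq⟩ := hF
  obtain ⟨𝓔', hcard', hblock', hsub', huniq'⟩ := hG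
  refine ⟨image₂ (joinFam V W) 𝓔 𝓔',
    (card_image₂_le _ _ _).trans (Nat.mul_le_mul hcard hcard'), ?_, ?_, ?_⟩
  · exact forall_mem_image₂.2 fun E hE E' hE' ↦ (hblock E hE).join hVW (hblock' E' hE')
  · exact forall_mem_image₂.2 fun E hE E' hE' X hX ↦
      ⟨hX.1, hsub E hE hX.2.1, hsub' E' hE' hX.2.2⟩
  · rintro X ⟨hX, hXV, hXW⟩
    obtain ⟨E, ⟨hE, hXE⟩, hE_uniq⟩ := huniq _ hXV
    obtain ⟨E', ⟨hE', hXE'⟩, hE'_uniq⟩ := huniq' _ hXW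
    refine ⟨_, ⟨mem_image₂_of_mem hE hE', hX, hXE, hXE'⟩, ?_⟩
    rintro _ ⟨h, hXD⟩
    obtain ⟨D, hD, D', hD', rfl⟩ := mem_image₂.1 h
    rw [hE_uniq D ⟨hD, hXD.2.1⟩, hE'_uniq D' ⟨hD', hXD.2.2⟩]

theorem pullback (hF : HasPartition V r F k) (π : β → α) (U : Finset β) :
    HasPartition U r (pullbackFam π U F) k := by
  classical
  obtain ⟨𝓔, hcard, hblock, hsub, huniq⟩ := hF
  refine ⟨𝓔.image (pullbackFam π U), card_image_le.trans hcard, ?_, ?_, ?_⟩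
  · exact forall_mem_image.2 fun E hE ↦ (hblock E hE).pullback π U
  · exact forall_mem_image.2 fun E hE X hX ↦ ⟨hX.1, hX.2.1, hsub E hE hX.2.2⟩
  · rintro X ⟨hX, hπ, hXF⟩
    obtain ⟨E, ⟨hE, hXE⟩, hE_uniq⟩ := huniq _ hXF
    refine ⟨_, ⟨mem_image_of_mem _ hE, hX, hπ, hXE⟩, ?_⟩
    rintro _ ⟨h, hXD⟩
    obtain ⟨D, hD, rfl⟩ := mem_image.1 h
    rw [hE_uniq D ⟨hD, hXD.2.2⟩]

theorem layer_of_card_le [Nonempty α] {U : Finset β} (h : HasPartition V r (layer V r) k)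
    (hUV : #U ≤ #V) : HasPartition U r (layer U r) k := by
  obtain ⟨π, hπV, hπ⟩ := (finite_toSet U).exists_injOn_of_encard_le (t := (V : Set α))
    (by simpa [Set.encard_coe_eq_coe_finsetCard] using hUV)
  convert h.pullback π U using 1
  ext X
  constructor
  · rintro ⟨hX, hcard⟩
    have hπX := hπ.mono (coe_subset.2 hX)
    exact ⟨hX, hπX, image_subset_iff.2 fun x hx ↦ hπV (hX hx),
      (card_image_of_injOn hπX).trans hcard⟩
  · rintro ⟨hX, hπX, -, hcard⟩
    exact ⟨hX, (card_image_of_injOn hπX).symm.trans hcard⟩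

end HasPartition

theorem hasPartition_layer_choose (V : Finset α) (r : ℕ) :
    HasPartition V r (layer V r) ((#V).choose r) := by
  have hlayer : layer V r = ⋃ X ∈ V.powersetCard r, {X} := by
    ext X
    simp [layer, mem_powersetCard]
  rw [hlayer, ← card_powersetCard, card_eq_sum_ones]
  refine HasPartition.biUnion (fun X _ Y _ hXY ↦ Set.disjoint_singleton.2 hXY) fun X hX ↦ ?_
  obtain ⟨hXV, rfl⟩ := mem_powersetCard.1 hX
  exact (isBlock_singleton hXV).hasPartition

end Partitions

section Numbers

variable {α : Type*} [DecidableEq α]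

theorem Block.isBlock_edges {V : Finset ℕ} {r : ℕ} (B : Block V r) : IsBlock V r B.edges :=
  ⟨B.parts, B.subset, B.disj, rfl⟩

theorem IsBlock.exists_edges_eq {V : Finset ℕ} {r : ℕ} {E : Set (Finset ℕ)} (h : IsBlock V r E)
    (hE : E.Nonempty) : ∃ B : Block V r, B.edges = E := by
  obtain ⟨P, hPV, hP, rfl⟩ := h
  obtain ⟨X, hX⟩ := hE
  have hne (i : Fin r) : (P i).Nonempty := by
    have hXP : (X ∩ P i).Nonempty := card_pos.1 (by rw [hX.1 i]; exact one_pos)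
    exact hXP.mono inter_subset_right
  exact ⟨⟨P, hne, hPV, fun i j hij ↦ hP hij⟩, rfl⟩

theorem ExactCover.hasPartition {V : Finset ℕ} {r k : ℕ} {F : Set (Finset ℕ)}
    (h : ExactCover V r k F) : HasPartition V r F k := by
  obtain ⟨B, hB, rfl⟩ := h
  have hpart := HasPartition.biUnion (s := univ) (F := fun i ↦ (B i).edges)
    (fun i _ j _ hij ↦ hB i j hij) fun i _ ↦ (B i).isBlock_edges.hasPartition
  simpa using hpart

theorem HasPartition.exists_exactCover {V : Finset ℕ} {r k : ℕ} {F : Set (Finset ℕ)}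
    (h : HasPartition V r F k) : ∃ j ≤ k, ExactCover V r j F := by
  classical
  obtain ⟨𝓔, hcard, hblock, hsub, huniq⟩ := h
  let 𝓓 := 𝓔.erase ∅
  let e : 𝓓 ≃ Fin #𝓓 := 𝓓.equivFin
  have hB (i : Fin #𝓓) : ∃ B : Block V r, B.edges = e.symm i :=
    (hblock _ (mem_of_mem_erase (e.symm i).2)).exists_edges_eq
      (Set.nonempty_iff_ne_empty.2 (ne_of_mem_erase (e.symm i).2))
  choose B hB using hB
  refine ⟨#𝓓, (card_erase_le).trans hcard, B, fun i j hij ↦ ?_, ?_⟩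
  · rw [hB, hB, Set.disjoint_left]
    intro X hXi hXj
    have hi := mem_of_mem_erase (e.symm i).2
    have heq := (huniq X (hsub _ hi hXi)).unique ⟨hi, hXi⟩
      ⟨mem_of_mem_erase (e.symm j).2, hXj⟩
    exact hij (e.symm.injective (Subtype.ext heq))
  · ext X
    simp only [hB, Set.mem_iUnion]
    refine ⟨fun ⟨i, hi⟩ ↦ hsub _ (mem_of_mem_erase (e.symm i).2) hi, fun hX ↦ ?_⟩
    obtain ⟨E, ⟨hE, hXE⟩, -⟩ := huniq X hX
    have hE' : E ∈ 𝓓 := mem_erase.2 ⟨Set.nonempty_iff_ne_empty.1 ⟨X, hXE⟩, hE⟩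
    exact ⟨e ⟨E, hE'⟩, by simpa using hXE⟩

theorem hasPartition_layer (V : Finset α) (r : ℕ) : HasPartition V r (layer V r) (f r #V) := by
  have hne : {k | ExactCover (range #V) r k (layer (range #V) r)}.Nonempty := by
    obtain ⟨j, -, hj⟩ := (hasPartition_layer_choose (range #V) r).exists_exactCover
    exact ⟨j, hj⟩
  exact (Nat.sInf_mem hne).hasPartition.layer_of_card_le (by simp)

theorem HasPartition.f_le [Nonempty α] {V : Finset α} {r k n : ℕ}
    (h : HasPartition V r (layer V r) k) (hn : n ≤ #V) : f r n ≤ k := by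
  obtain ⟨j, hj, hcover⟩ :=
    (h.layer_of_card_le (U := range n) (by simpa using hn)).exists_exactCover
  exact (Nat.sInf_le hcover).trans hj

theorem f_mono (r : ℕ) : Monotone (f r) :=
  fun m n hmn ↦ by simpa using (hasPartition_layer (range n) r).f_le (n := m) (by simpa using hmn)

theorem f_zero_le (n : ℕ) : f 0 n ≤ 1 := by
  have hlayer : layer (range n) 0 = {∅} := by
    ext X
    simp only [layer, Set.mem_ofPred_eq, card_eq_zero, Set.mem_singleton_iff]
    exact ⟨And.right, by rintro rfl; simp⟩
  have hpart := (isBlock_singleton (empty_subset (range n))).hasPartition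
  rw [← hlayer, card_empty] at hpart
  exact hpart.f_le (by simp)

theorem f_one_le (n : ℕ) : f 1 n ≤ 1 :=
  (isBlock_layer_one (range n)).hasPartition.f_le (by simp)

theorem card_eq_card_inter_add {V W X : Finset α} (hVW : Disjoint V W) (hX : X ⊆ V ∪ W) :
    #X = #(X ∩ V) + #(X ∩ W) := by
  rw [← card_union_of_disjoint (hVW.mono inter_subset_right inter_subset_right),
    ← inter_union_distrib_left, inter_eq_left.2 hX]

theorem mem_joinFam_layer {V W X : Finset α} {r s : ℕ} :
    X ∈ joinFam V W (layer V r) (layer W s) ↔ X ⊆ V ∪ W ∧ #(X ∩ V) = r ∧ #(X ∩ W) = s := by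
  simp [joinFam, layer]

end Numbers

section Classical

theorem exists_mem_card_inter_range_eq {X : Finset ℕ} {r : ℕ} (hr : r < #X) :
    ∃ v ∈ X, #(X ∩ range v) = r := by
  have hcard (hX : {x | x ∈ X}.Finite) : r < #hX.toFinset := by
    convert hr
    ext
    simp
  refine ⟨Nat.nth (· ∈ X) r, Nat.nth_mem r hcard, ?_⟩
  rw [inter_comm, ← filter_mem_eq_inter, ← Nat.count_eq_card_filter_range, Nat.count_nth hcard]

theorem strictMonoOn_card_inter_range (X : Finset ℕ) :
    StrictMonoOn (fun v ↦ #(X ∩ range v)) X := by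
  intro v hv w _ hvw
  refine card_lt_card ⟨inter_subset_inter_left (range_subset_range.2 hvw.le), fun h ↦ ?_⟩
  simpa using h (mem_inter.2 ⟨hv, mem_range.2 hvw⟩)

/-- The subsets of `range n` with second largest element `v` and `r` further elements below `v`. -/
def secondLargestFam (n r v : ℕ) : Set (Finset ℕ) :=
  joinFam (range v) ({v} ∪ Ioo v n) (layer (range v) r)
    (joinFam {v} (Ioo v n) (layer {v} 1) (layer (Ioo v n) 1))

theorem range_union_singleton_union_Ioo {n v : ℕ} (hv : v < n) :
    range v ∪ ({v} ∪ Ioo v n) = range n := by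
  ext x
  simp only [mem_union, mem_range, mem_singleton, mem_Ioo]
  omega

theorem disjoint_range_singleton_union_Ioo (n v : ℕ) : Disjoint (range v) ({v} ∪ Ioo v n) :=
  disjoint_left.2 fun x hx h ↦ by
    simp only [mem_range, mem_union, mem_singleton, mem_Ioo] at hx h
    omega

theorem hasPartition_secondLargestFam {n v : ℕ} (r : ℕ) (hv : v < n) :
    HasPartition (range n) (r + 2) (secondLargestFam n r v) (f r v) := by
  have hpair := (((isBlock_layer_one {v}).join (by simp : Disjoint {v} (Ioo v n))
    (isBlock_layer_one _))).hasPartition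
  have hjoin := (hasPartition_layer (range v) r).join
    (disjoint_range_singleton_union_Ioo n v) hpair
  rwa [range_union_singleton_union_Ioo hv, card_range, mul_one] at hjoin

theorem mem_secondLargestFam {n r v : ℕ} {X : Finset ℕ} (hv : v < n) :
    X ∈ secondLargestFam n r v ↔ X ∈ layer (range n) (r + 2) ∧ v ∈ X ∧ #(X ∩ range v) = r := by
  have hsingleton : #(X ∩ {v}) = 1 ↔ v ∈ X := by by_cases h : v ∈ X <;> simp [h]
  have hsplit (hX : X ⊆ range n) : #X = #(X ∩ range v) + (#(X ∩ {v}) + #(X ∩ Ioo v n)) := by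
    rw [card_eq_card_inter_add (disjoint_range_singleton_union_Ioo n v)
      (by rwa [range_union_singleton_union_Ioo hv]),
      card_eq_card_inter_add (by simp : Disjoint {v} (Ioo v n)) (inter_subset_right (s₁ := X)),
      inter_assoc, inter_assoc, inter_eq_right.2 subset_union_left,
      inter_eq_right.2 subset_union_right]
  have htrace (A : Finset ℕ) (hA : A ⊆ {v} ∪ Ioo v n) : X ∩ ({v} ∪ Ioo v n) ∩ A = X ∩ A := by
    rw [inter_assoc, inter_eq_right.2 hA]
  simp only [secondLargestFam, joinFam, layer, Set.mem_ofPred_eq, inter_subset_right, true_and,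
    range_union_singleton_union_Ioo hv, htrace _ subset_union_left, htrace _ subset_union_right,
    ← hsingleton]
  constructor
  · rintro ⟨hX, hr, h1, h2⟩
    exact ⟨⟨hX, by rw [hsplit hX]; omega⟩, h1, hr⟩
  · rintro ⟨⟨hX, hcard⟩, h1, hr⟩
    rw [hsplit hX] at hcard
    exact ⟨hX, hr, h1, by omega⟩

theorem f_add_two_le (r n : ℕ) : f (r + 2) n ≤ ∑ v ∈ range n, f r v := by
  have hlayer : layer (range n) (r + 2) = ⋃ v ∈ range n, secondLargestFam n r v := by
    ext X
    simp only [Set.mem_iUnion, exists_prop]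
    constructor
    · rintro ⟨hX, hcard⟩
      obtain ⟨v, hv, hr⟩ := exists_mem_card_inter_range_eq (X := X) (r := r) (by omega)
      exact ⟨v, hX hv, (mem_secondLargestFam (mem_range.1 (hX hv))).2 ⟨⟨hX, hcard⟩, hv, hr⟩⟩
    · rintro ⟨v, hv, hX⟩
      exact ((mem_secondLargestFam (mem_range.1 hv)).1 hX).1
  have hdisj : ((range n : Finset ℕ) : Set ℕ).PairwiseDisjoint (secondLargestFam n r) := by
    intro v hv w hw hvw
    refine Set.disjoint_left.2 fun X hXv hXw ↦ hvw ?_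
    obtain ⟨-, hv, hrv⟩ := (mem_secondLargestFam (by simpa using hv)).1 hXv
    obtain ⟨-, hw, hrw⟩ := (mem_secondLargestFam (by simpa using hw)).1 hXw
    exact (strictMonoOn_card_inter_range X).injOn hv hw (hrv.trans hrw.symm)
  have hpart := HasPartition.biUnion hdisj fun v hv ↦
    hasPartition_secondLargestFam r (mem_range.1 hv)
  rw [← hlayer] at hpart
  exact hpart.f_le (by simp)

theorem sum_range_choose_eq_choose_succ (n s : ℕ) :
    ∑ v ∈ range n, v.choose s = n.choose (s + 1) := by
  induction n with
  | zero => simp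
  | succ n ih => rw [sum_range_succ, ih, Nat.choose_succ_succ, add_comm]

theorem f_le_choose : ∀ r n : ℕ, f r n ≤ n.choose (r / 2)
  | 0, n => by simpa using f_zero_le n
  | 1, n => by simpa using f_one_le n
  | r + 2, n => by
    calc f (r + 2) n ≤ ∑ v ∈ range n, f r v := f_add_two_le r n
      _ ≤ ∑ v ∈ range n, v.choose (r / 2) := sum_le_sum fun v _ ↦ f_le_choose r v
      _ = n.choose ((r + 2) / 2) := by
        rw [Nat.add_div_right _ two_pos, sum_range_choose_eq_choose_succ]

end Classical

section Types

variable {α ι : Type*} [DecidableEq α]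

theorem layer_union {V W : Finset α} (hVW : Disjoint V W) (r : ℕ) :
    layer (V ∪ W) r = ⋃ p ∈ antidiagonal r, joinFam V W (layer V p.1) (layer W p.2) := by
  ext X
  simp only [Set.mem_iUnion, mem_joinFam_layer, HasAntidiagonal.mem_antidiagonal, exists_prop]
  constructor
  · rintro ⟨hX, rfl⟩
    exact ⟨(#(X ∩ V), #(X ∩ W)), (card_eq_card_inter_add hVW hX).symm, hX, rfl, rfl⟩
  · rintro ⟨p, hp, hX, hV, hW⟩
    exact ⟨hX, by rw [card_eq_card_inter_add hVW hX, hV, hW, hp]⟩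

theorem f_add_le (r a b : ℕ) : f r (a + b) ≤ ∑ p ∈ antidiagonal r, f p.1 a * f p.2 b := by
  have hVW : Disjoint (range a) (Ico a (a + b)) :=
    disjoint_left.2 fun x hx hx' ↦ by simp only [mem_range, mem_Ico] at hx hx'; omega
  have hpart := HasPartition.biUnion (V := range a ∪ Ico a (a + b)) (r := r) (s := antidiagonal r)
    (F := fun p ↦ joinFam (range a) (Ico a (a + b)) (layer (range a) p.1)
      (layer (Ico a (a + b)) p.2))
    (k := fun p ↦ f p.1 a * f p.2 b) ?_ fun p hp ↦ ?_
  · rw [← layer_union hVW] at hpart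
    exact hpart.f_le (by simp [card_union_of_disjoint hVW])
  · refine fun p _ q _ hpq ↦ Set.disjoint_left.2 fun X hXp hXq ↦ hpq ?_
    rw [mem_joinFam_layer] at hXp hXq
    exact Prod.ext (hXp.2.1.symm.trans hXq.2.1) (hXp.2.2.symm.trans hXq.2.2)
  · have hjoin := (hasPartition_layer (range a) p.1).join hVW
      (hasPartition_layer (Ico a (a + b)) p.2)
    simpa [HasAntidiagonal.mem_antidiagonal.1 hp] using hjoin

/-- The sets of type `r` with respect to the parts `P i`, `i ∈ T`: the subsets of the union of these
parts which have `r i` elements in each part `P i`. -/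
def typeFam (P : ι → Finset α) (T : Finset ι) (r : ι → ℕ) : Set (Finset α) :=
  {X | X ⊆ T.biUnion P ∧ ∀ i ∈ T, #(X ∩ P i) = r i}

variable {P : ι → Finset α}

theorem typeFam_empty (r : ι → ℕ) : typeFam P ∅ r = {∅} := by
  ext X
  simp [typeFam]

theorem typeFam_singleton (a : ι) (r : ι → ℕ) : typeFam P {a} r = layer (P a) (r a) := by
  ext X
  simp only [typeFam, layer, Set.mem_ofPred_eq, singleton_biUnion, mem_singleton, forall_eq]
  exact and_congr_right fun hX ↦ by rw [inter_eq_left.2 hX]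

theorem layer_biUnion [DecidableEq ι] (hP : Pairwise fun i j ↦ Disjoint (P i) (P j))
    (T : Finset ι) (r : ℕ) :
    layer (T.biUnion P) r = ⋃ s ∈ T.piAntidiag r, typeFam P T s := by
  have hcard {X : Finset α} (hX : X ⊆ T.biUnion P) : #X = ∑ i ∈ T, #(X ∩ P i) := by
    conv_lhs => rw [← inter_eq_left.2 hX, inter_biUnion]
    exact card_biUnion fun i _ j _ hij ↦ (hP hij).mono inter_subset_right inter_subset_right
  ext X
  simp only [Set.mem_iUnion, exists_prop, mem_piAntidiag]
  constructor
  · rintro ⟨hX, rfl⟩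
    refine ⟨fun i ↦ if i ∈ T then #(X ∩ P i) else 0, ⟨?_, by simp +contextual⟩, hX,
      fun i hi ↦ by simp [hi]⟩
    rw [hcard hX]
    exact sum_congr rfl fun i hi ↦ if_pos hi
  · rintro ⟨s, ⟨rfl, -⟩, hX, hs⟩
    exact ⟨hX, (hcard hX).trans (sum_congr rfl hs)⟩

theorem pairwiseDisjoint_typeFam [DecidableEq ι] (T : Finset ι) (r : ℕ) :
    (T.piAntidiag r : Set (ι → ℕ)).PairwiseDisjoint (typeFam P T) := by
  intro s hs t ht hst
  refine Set.disjoint_left.2 fun X hXs hXt ↦ hst ?_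
  have hs := (mem_piAntidiag.1 hs).2
  have ht := (mem_piAntidiag.1 ht).2
  ext i
  by_cases hi : i ∈ T
  · rw [← hXs.2 i hi, hXt.2 i hi]
  · rw [not_imp_comm.1 (hs i) hi, not_imp_comm.1 (ht i) hi]

variable (hP : Pairwise fun i j ↦ Disjoint (P i) (P j))
include hP

theorem disjoint_biUnion_of_disjoint {S T : Finset ι} (hST : Disjoint S T) :
    Disjoint (S.biUnion P) (T.biUnion P) := by
  refine (disjoint_biUnion_left ..).2 fun i hi ↦ (disjoint_biUnion_right ..).2 fun j hj ↦ hP ?_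
  rintro rfl
  exact disjoint_left.1 hST hi hj

variable [DecidableEq ι]

theorem HasPartition.typeFam_union {S T : Finset ι} (hST : Disjoint S T) {r : ι → ℕ}
    {a b k l : ℕ} (hS : HasPartition (S.biUnion P) a (typeFam P S r) k)
    (hT : HasPartition (T.biUnion P) b (typeFam P T r) l) :
    HasPartition ((S ∪ T).biUnion P) (a + b) (typeFam P (S ∪ T) r) (k * l) := by
  have htrace (X : Finset α) (U : Finset ι) {i : ι} (hi : i ∈ U) :
      X ∩ U.biUnion P ∩ P i = X ∩ P i := by
    rw [inter_assoc, inter_eq_right.2 (subset_biUnion_of_mem P hi)]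
  convert hS.join (disjoint_biUnion_of_disjoint hP hST) hT using 1
  · exact union_biUnion
  · ext X
    simp only [typeFam, joinFam, Set.mem_ofPred_eq, union_biUnion, inter_subset_right, true_and,
      mem_union, or_imp, forall_and]
    refine and_congr_right fun _ ↦ and_congr ?_ ?_
    · exact forall₂_congr fun i hi ↦ by rw [htrace X S hi]
    · exact forall₂_congr fun i hi ↦ by rw [htrace X T hi]

omit [DecidableEq ι] in
theorem hasPartition_typeFam (T : Finset ι) (r : ι → ℕ) :
    HasPartition (T.biUnion P) (∑ i ∈ T, r i) (typeFam P T r) (∏ i ∈ T, f (r i) #(P i)) := by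
  classical
  induction T using Finset.induction_on with
  | empty => simpa [typeFam_empty] using (isBlock_singleton (empty_subset ∅)).hasPartition
  | insert a T ha ih =>
    rw [sum_insert ha, prod_insert ha, insert_eq]
    refine HasPartition.typeFam_union hP (disjoint_singleton_left.2 ha) ?_ ih
    rw [typeFam_singleton, singleton_biUnion]
    exact hasPartition_layer (P a) (r a)

end Types

section Saving

variable {α : Type*} [DecidableEq α]

instance {ι : Type*} [Fintype ι] (P : ι → Finset α) (X : Finset α) :
    Decidable (X ∈ transversals P) :=
  inferInstanceAs (Decidable ((∀ i, #(X ∩ P i) = 1) ∧ ∀ x ∈ X, ∃ i, x ∈ P i))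

/-- The bicliques in `K₄` of a partition of `K₄ × K₆` into fourteen products of bicliques; the
bicliques in `K₆` are given by `sixBiclique`. -/
def fourBiclique : Fin 14 → Fin 2 → Finset (Fin 4) :=
  ![![{0, 1}, {2, 3}], ![{0, 1}, {2, 3}], ![{0, 2}, {1, 3}], ![{0, 2}, {1, 3}],
    ![{0, 3}, {1, 2}], ![{0, 3}, {1, 2}], ![{0}, {1}], ![{2}, {3}], ![{0}, {2}], ![{1}, {3}],
    ![{0}, {3}], ![{1}, {2}], ![{0}, {3}], ![{1}, {2}]]

/-- The bicliques in `K₆` matching `fourBiclique`. -/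
def sixBiclique : Fin 14 → Fin 2 → Finset (Fin 6) :=
  ![![{5}, {2, 3}], ![{0, 3}, {4}], ![{1, 5}, {4}], ![{1, 2}, {0}], ![{2, 5}, {1}],
    ![{0, 1, 2}, {3}], ![{0, 2, 3}, {4, 5}], ![{0, 2, 3}, {4, 5}], ![{0, 4}, {1, 2, 5}],
    ![{0, 4}, {1, 2, 5}], ![{0, 1}, {3, 5}], ![{0, 1}, {3, 5}], ![{1, 3, 4}, {2}],
    ![{1, 3, 4}, {2}]]

theorem isBlock_fourBiclique (l : Fin 14) : IsBlock univ 2 (transversals (fourBiclique l)) :=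
  ⟨fourBiclique l, fun _ ↦ subset_univ _, by revert l; unfold Pairwise; decide, rfl⟩

theorem isBlock_sixBiclique (l : Fin 14) : IsBlock univ 2 (transversals (sixBiclique l)) :=
  ⟨sixBiclique l, fun _ ↦ subset_univ _, by revert l; unfold Pairwise; decide, rfl⟩

theorem existsUnique_mem_transversals_biclique :
    ∀ Y ∈ powersetCard 2 (univ : Finset (Fin 4)), ∀ Z ∈ powersetCard 2 (univ : Finset (Fin 6)),
      ∃! l, Y ∈ transversals (fourBiclique l) ∧ Z ∈ transversals (sixBiclique l) := by
  unfold ExistsUnique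
  decide +kernel

theorem IsBlock.subset_layer {V : Finset α} {r : ℕ} {E : Set (Finset α)} (h : IsBlock V r E) :
    E ⊆ layer V r := by
  obtain ⟨P, hPV, hP, rfl⟩ := h
  rintro X ⟨hcard, hcover⟩
  have hX : X ⊆ univ.biUnion P := fun x hx ↦ by simpa using hcover x hx
  refine ⟨hX.trans (biUnion_subset.2 fun i _ ↦ hPV i), ?_⟩
  rw [← inter_eq_left.2 hX, inter_biUnion, card_biUnion fun i _ j _ hij ↦
    (hP hij).mono inter_subset_right inter_subset_right]
  simp [hcard]

/-- The pairs of vertices in `V` with different colours. -/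
def bichromaticPairs {p : ℕ} (c : α → Fin p) (V : Finset α) : Set (Finset α) :=
  pullbackFam c V (layer univ 2)

omit [DecidableEq α] in
theorem mem_bichromaticPairs {p : ℕ} {c : α → Fin p} {V X : Finset α} :
    X ∈ bichromaticPairs c V ↔ X ∈ layer V 2 ∧ Set.InjOn c X := by
  simp only [bichromaticPairs, pullbackFam, layer, Set.mem_ofPred_eq, subset_univ, true_and]
  constructor
  · rintro ⟨hX, hc, hcard⟩
    exact ⟨⟨hX, by rw [← hcard, card_image_of_injOn hc]⟩, hc⟩
  · rintro ⟨⟨hX, hcard⟩, hc⟩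
    exact ⟨hX, hc, by rw [card_image_of_injOn hc, hcard]⟩

theorem hasPartition_join_bichromaticPairs {V₀ W₀ V W : Finset α} (hVW : Disjoint V₀ W₀)
    (hV : V ⊆ V₀) (hW : W ⊆ W₀) (c : α → Fin 4) (d : α → Fin 6) :
    HasPartition (V₀ ∪ W₀) 4 (joinFam V₀ W₀ (bichromaticPairs c V) (bichromaticPairs d W)) 14 := by
  have hunion : joinFam V₀ W₀ (bichromaticPairs c V) (bichromaticPairs d W) =
      ⋃ l ∈ (univ : Finset (Fin 14)),
        joinFam V₀ W₀ (pullbackFam c V (transversals (fourBiclique l)))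
          (pullbackFam d W (transversals (sixBiclique l))) := by
    ext X
    simp only [Set.mem_iUnion, mem_univ, exists_true_left]
    constructor
    · rintro ⟨hX, ⟨hXV, hc, hXc⟩, hXW, hd, hXd⟩
      obtain ⟨l, ⟨hlc, hld⟩, -⟩ := existsUnique_mem_transversals_biclique _
        (mem_powersetCard.2 hXc) _ (mem_powersetCard.2 hXd)
      exact ⟨l, hX, ⟨hXV, hc, hlc⟩, hXW, hd, hld⟩
    · rintro ⟨l, hX, ⟨hXV, hc, hlc⟩, hXW, hd, hld⟩
      exact ⟨hX, ⟨hXV, hc, (isBlock_fourBiclique l).subset_layer hlc⟩, hXW, hd,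
        (isBlock_sixBiclique l).subset_layer hld⟩
  rw [hunion]
  refine HasPartition.biUnion (k := fun _ ↦ 1) (fun l _ m _ hlm ↦ ?_) fun l _ ↦
    ((((isBlock_fourBiclique l).pullback c V).mono hV).join hVW
      (((isBlock_sixBiclique l).pullback d W).mono hW)).hasPartition
  refine Set.disjoint_left.2 fun X ⟨_, hcl, hdl⟩ ⟨_, hcm, hdm⟩ ↦ hlm ?_
  exact (existsUnique_mem_transversals_biclique _
    (mem_powersetCard.2 ((isBlock_fourBiclique l).subset_layer hcl.2.2)) _
    (mem_powersetCard.2 ((isBlock_sixBiclique l).subset_layer hdl.2.2))).unique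
      ⟨hcl.2.2, hdl.2.2⟩ ⟨hcm.2.2, hdm.2.2⟩

omit [DecidableEq α] in
theorem exists_coloring_injOn_iff {p : ℕ} {V : Finset α} (hp : p ≤ #V) :
    ∃ V' ⊆ V, #V' = #V - p ∧
      ∃ c : α → Fin (p + 1), ∀ X ∈ layer V 2, Set.InjOn c X ↔ ¬X ⊆ V' := by
  classical
  obtain ⟨S, hSV, rfl⟩ := exists_subset_card_eq hp
  let c (x : α) : Fin (#S + 1) :=
    if hx : x ∈ S then (S.equivFin ⟨x, hx⟩).castSucc else Fin.last _
  have hc {x y : α} (hxy : x ≠ y) : c x = c y ↔ x ∉ S ∧ y ∉ S := by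
    by_cases hx : x ∈ S <;> by_cases hy : y ∈ S <;>
      simp [c, hx, hy, hxy, Fin.castSucc_ne_last, (Fin.castSucc_ne_last _).symm]
  refine ⟨V \ S, sdiff_subset, card_sdiff_of_subset hSV, c, fun X ⟨hXV, hX⟩ ↦ ?_⟩
  obtain ⟨x, y, hxy, rfl⟩ := card_eq_two.1 hX
  rw [coe_pair, Set.injOn_pair, insert_subset_iff, singleton_subset_iff, mem_sdiff, mem_sdiff,
    hc hxy]
  simp only [insert_subset_iff, singleton_subset_iff] at hXV
  tauto

omit [DecidableEq α] in
theorem exists_layer_two_eq_union {p : ℕ} {V : Finset α} (hp : p ≤ #V) :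
    ∃ V' ⊆ V, #V' = #V - p ∧ ∃ c : α → Fin (p + 1),
      Disjoint (bichromaticPairs c V) (layer V' 2) ∧
        layer V 2 = bichromaticPairs c V ∪ layer V' 2 := by
  obtain ⟨V', hV', hcard, c, hc⟩ := exists_coloring_injOn_iff hp
  have hlayer : layer V' 2 ⊆ layer V 2 := fun X hX ↦ ⟨hX.1.trans hV', hX.2⟩
  refine ⟨V', hV', hcard, c, Set.disjoint_left.2 fun X hX hX' ↦ ?_, ?_⟩
  · rw [mem_bichromaticPairs] at hX
    exact (hc X hX.1).1 hX.2 hX'.1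
  · ext X
    rw [Set.mem_union, mem_bichromaticPairs]
    refine ⟨fun hX ↦ ?_, fun hX ↦ hX.elim And.left fun h ↦ hlayer h⟩
    by_cases hXV' : X ⊆ V'
    · exact Or.inr ⟨hXV', hX.2⟩
    · exact Or.inl ⟨hX, (hc X hX).2 hXV'⟩

theorem joinFam_comm (V W : Finset α) (F G : Set (Finset α)) :
    joinFam V W F G = joinFam W V G F := by
  ext X
  simp only [joinFam, Set.mem_ofPred_eq, union_comm V W, and_comm (a := X ∩ V ∈ F)]

theorem joinFam_union_left (V W : Finset α) (F F' G : Set (Finset α)) :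
    joinFam V W (F ∪ F') G = joinFam V W F G ∪ joinFam V W F' G := by
  ext X
  simp only [joinFam, Set.mem_ofPred_eq, Set.mem_union]
  tauto

/-- Peel off `p` vertices at a time: the pairs meeting them are the bichromatic pairs of the
colouring that gives these `p` vertices distinct colours and all remaining ones a common colour. -/
theorem HasPartition.join_layer_two {p r k : ℕ} {V₀ W : Finset α} {G : Set (Finset α)}
    (h : ∀ V ⊆ V₀, ∀ c : α → Fin (p + 1),
      HasPartition (V₀ ∪ W) r (joinFam V₀ W (bichromaticPairs c V) G) k) (a : ℕ) :
    ∀ V ⊆ V₀, #V = p * a → HasPartition (V₀ ∪ W) r (joinFam V₀ W (layer V 2) G) (k * a) := by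
  induction a with
  | zero =>
    intro V _ hV
    obtain rfl : V = ∅ := by simpa using hV
    have hempty : joinFam V₀ W (layer ∅ 2) G = ∅ := by
      simp +contextual [Set.eq_empty_iff_forall_notMem, joinFam, layer]
    exact hempty ▸ hasPartition_empty _ _ _
  | succ a ih =>
    intro V hV hcard
    rw [mul_add_one] at hcard
    obtain ⟨V', hV', hcard', c, hdisj, hunion⟩ := exists_layer_two_eq_union (p := p) (V := V)
      (by omega)
    rw [hunion, joinFam_union_left, mul_add_one, add_comm (k * a)]
    refine union ?_ (h V hV c) (ih V' (hV'.trans hV) (by omega))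
    exact Set.disjoint_left.2 fun X hX hX' ↦ Set.disjoint_left.1 hdisj hX.2.1 hX'.2.1

theorem hasPartition_join_layer_two {V W : Finset α} (hVW : Disjoint V W) {a b : ℕ}
    (hV : #V = 3 * a) (hW : #W = 5 * b) :
    HasPartition (V ∪ W) 4 (joinFam V W (layer V 2) (layer W 2)) (14 * b * a) := by
  refine HasPartition.join_layer_two (fun V' hV' c ↦ ?_) a V Subset.rfl hV
  rw [joinFam_comm, union_comm]
  refine HasPartition.join_layer_two (fun W' hW' d ↦ ?_) b W Subset.rfl hW
  rw [joinFam_comm, union_comm]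
  exact hasPartition_join_bichromaticPairs hVW hV' hW' c d

end Saving

section TypeCost

variable {α ι : Type*}

/-- A bound for the number of blocks needed for the sets of type `r`, where `∑ i ∈ T, r i = 2 * t`
and the parts have size `15 * q`. -/
def typeCost (q t : ℕ) (T : Finset ι) (r : ι → ℕ) : ℕ :=
  if ∀ i ∈ T, 2 ∣ r i then
    if ∀ i ∈ T, r i ≤ 2 then (210 * q ^ 2) ^ (t / 2) * (15 * q) ^ (t % 2) else (15 * q) ^ t
  else (15 * q) ^ t / (15 * q)

variable [DecidableEq α] {P : ι → Finset α}
  (hP : Pairwise fun i j ↦ Disjoint (P i) (P j)) {T : Finset ι}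
include hP

theorem hasPartition_typeFam_of_div_two_sum_le {m : ℕ} (hm : 0 < m)
    (hcard : ∀ i ∈ T, #(P i) = m) (r : ι → ℕ) {a : ℕ} (ha : ∑ i ∈ T, r i / 2 ≤ a) :
    HasPartition (T.biUnion P) (∑ i ∈ T, r i) (typeFam P T r) (m ^ a) := by
  refine (hasPartition_typeFam hP T r).mono_card ?_
  calc ∏ i ∈ T, f (r i) #(P i) ≤ ∏ i ∈ T, m ^ (r i / 2) := prod_le_prod' fun i hi ↦ by
        rw [hcard i hi]
        exact (f_le_choose _ _).trans (Nat.choose_le_pow _ _)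
    _ = m ^ ∑ i ∈ T, r i / 2 := prod_pow_eq_pow_sum ..
    _ ≤ m ^ a := Nat.pow_le_pow_right hm ha

theorem hasPartition_typeFam_pair [DecidableEq ι] {i j : ι} (hij : i ≠ j) {q : ℕ}
    (hi : #(P i) = 15 * q) (hj : #(P j) = 15 * q) {r : ι → ℕ} (hri : r i = 2) (hrj : r j = 2) :
    HasPartition (({i, j} : Finset ι).biUnion P) 4 (typeFam P {i, j} r) (210 * q ^ 2) := by
  have hjoin := hasPartition_join_layer_two (a := 5 * q) (b := 3 * q) (hP hij) (by omega) (by omega)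
  convert hjoin using 1
  · rw [biUnion_insert, singleton_biUnion]
  · ext X
    simp [typeFam, mem_joinFam_layer, hri, hrj]
  · ring

theorem hasPartition_typeFam_eq_two {q : ℕ} (hcard : ∀ i ∈ T, #(P i) = 15 * q) {r : ι → ℕ}
    (hr : ∀ i ∈ T, r i = 2) :
    HasPartition (T.biUnion P) (2 * #T) (typeFam P T r)
      ((210 * q ^ 2) ^ (#T / 2) * (15 * q) ^ (#T % 2)) := by
  classical
  induction hT : #T using Nat.twoStepInduction generalizing T with
  | zero =>
    obtain rfl := card_eq_zero.1 hT
    simpa using hasPartition_typeFam hP ∅ r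
  | one =>
    obtain ⟨i, rfl⟩ := card_eq_one.1 hT
    have hf : f 2 (15 * q) ≤ 15 * q := by simpa using f_le_choose 2 (15 * q)
    simpa [hr, hcard] using (hasPartition_typeFam hP {i} r).mono_card (by simpa [hr, hcard])
  | more t ih _ =>
    obtain ⟨S, hST, hS⟩ := exists_subset_card_eq (show 2 ≤ #T by omega)
    obtain ⟨i, j, hij, rfl⟩ := card_eq_two.1 hS
    have hi : i ∈ T := hST (by simp)
    have hj : j ∈ T := hST (by simp)
    have hpair := hasPartition_typeFam_pair hP hij (hcard i hi) (hcard j hj) (hr i hi) (hr j hj)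
    have hrest := ih (T := T \ {i, j}) (fun l hl ↦ hcard l (sdiff_subset hl))
      (fun l hl ↦ hr l (sdiff_subset hl)) (by rw [card_sdiff_of_subset hST]; omega)
    have hunion := HasPartition.typeFam_union hP disjoint_sdiff hpair hrest
    rw [union_sdiff_of_subset hST] at hunion
    convert hunion using 1
    · ring
    · rw [Nat.add_mod_right, Nat.add_div_right _ two_pos]
      ring

theorem hasPartition_typeFam_eq_zero_or_two {q : ℕ} (hcard : ∀ i ∈ T, #(P i) = 15 * q) {t : ℕ}
    {r : ι → ℕ} (hr : ∀ i ∈ T, r i = 0 ∨ r i = 2) (hsum : ∑ i ∈ T, r i = 2 * t) :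
    HasPartition (T.biUnion P) (2 * t) (typeFam P T r)
      ((210 * q ^ 2) ^ (t / 2) * (15 * q) ^ (t % 2)) := by
  classical
  have hzero {i : ι} (hi : i ∈ T.filter fun i ↦ ¬ r i = 2) : r i = 0 := by
    rw [mem_filter] at hi
    exact (hr i hi.1).resolve_right hi.2
  have ht : #{i ∈ T | r i = 2} = t := by
    have hsum' := sum_filter_add_sum_filter_not T (fun i ↦ r i = 2) r
    rw [sum_eq_zero fun i ↦ hzero, sum_congr rfl fun i hi ↦ (mem_filter.1 hi).2, sum_const,
      hsum, smul_eq_mul] at hsum'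
    omega
  have htwo := hasPartition_typeFam_eq_two hP (T := T.filter fun i ↦ r i = 2) (q := q) (r := r)
    (fun i hi ↦ hcard i (mem_filter.1 hi).1) fun i hi ↦ (mem_filter.1 hi).2
  have hrest := (hasPartition_typeFam hP (T.filter fun i ↦ ¬ r i = 2) r).mono_card
    (prod_le_one' fun i hi ↦ by rw [hzero hi]; exact f_zero_le _)
  have hunion := HasPartition.typeFam_union hP (disjoint_filter_filter_not ..) htwo hrest
  rwa [filter_union_filter_not_eq, sum_eq_zero fun i ↦ hzero, ht, add_zero, mul_one] at hunion

theorem hasPartition_typeFam_typeCost {q : ℕ} (hq : 0 < q) (hcard : ∀ i ∈ T, #(P i) = 15 * q)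
    {t : ℕ} {r : ι → ℕ} (hr : ∑ i ∈ T, r i = 2 * t) :
    HasPartition (T.biUnion P) (2 * t) (typeFam P T r) (typeCost q t T r) := by
  have hm : 0 < 15 * q := by omega
  have hdiv : 2 * ∑ i ∈ T, r i / 2 ≤ 2 * t := by
    rw [mul_sum, ← hr]
    exact sum_le_sum fun i _ ↦ Nat.mul_div_le _ _
  unfold typeCost
  split_ifs with heven hle
  · refine hasPartition_typeFam_eq_zero_or_two hP hcard (fun i hi ↦ ?_) hr
    have := heven i hi
    have := hle i hi
    omega
  · rw [← hr]
    exact hasPartition_typeFam_of_div_two_sum_le hP hm hcard r (by omega)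
  · push Not at heven
    obtain ⟨i, hi, hodd⟩ := heven
    have hlt : 2 * ∑ i ∈ T, r i / 2 < 2 * t := by
      rw [mul_sum, ← hr]
      exact sum_lt_sum (fun i _ ↦ Nat.mul_div_le _ _) ⟨i, hi, by omega⟩
    rw [← hr, ← Nat.pow_sub_one (by omega) (by omega)]
    exact hasPartition_typeFam_of_div_two_sum_le hP hm hcard r (by omega)

end TypeCost

section EvenBound

variable {ι : Type*} [DecidableEq ι]

theorem card_piAntidiag (T : Finset ι) (n : ℕ) : #(T.piAntidiag n) = (#T + n - 1).choose n := by
  rw [← card_finsuppAntidiag_nat_eq_choose]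
  simp [finsuppAntidiag]

theorem choose_le_card_filter_piAntidiag (T : Finset ι) (t : ℕ) :
    (#T).choose t ≤ #{s ∈ T.piAntidiag t | ∀ i ∈ T, s i ≤ 1} := by
  rw [← card_powersetCard]
  refine card_le_card_of_injOn (fun S i ↦ if i ∈ S then 1 else 0) (fun S hS ↦ ?_) ?_
  · obtain ⟨hST, hS⟩ := mem_powersetCard.1 hS
    simp only [coe_filter, mem_piAntidiag, Set.mem_ofPred_eq]
    refine ⟨⟨?_, by simpa using fun i ↦ @hST i⟩, fun i _ ↦ by split_ifs <;> simp⟩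
    rw [sum_ite_mem, inter_eq_right.2 hST, sum_const, hS, smul_eq_mul, mul_one]
  · refine fun S _ S' _ hSS' ↦ Finset.ext fun i ↦ ?_
    have := congrFun hSS' i
    by_cases hi : i ∈ S <;> by_cases hi' : i ∈ S' <;> simp_all

/-- The leading coefficient, in the part size, of the bound for `2 * t`-sets in `k` parts: there are
`(k + t - 1).choose t` types with even entries, and those with entries at most `2` are cheaper. -/
noncomputable def evenLead (k t : ℕ) : ℝ :=
  (k + t - 1).choose t - (1 - (14 / 15 : ℝ) ^ (t / 2)) * k.choose t

theorem sum_typeCost_two_nsmul_le (q t : ℕ) (T : Finset ι) :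
    ((∑ s ∈ T.piAntidiag t, typeCost q t T (2 • s) : ℕ) : ℝ) ≤ (15 * q) ^ t * evenLead #T t := by
  have hcost (s : ι → ℕ) : (typeCost q t T (2 • s) : ℝ) =
      (15 * q) ^ t -
        if ∀ i ∈ T, s i ≤ 1 then (15 * q) ^ t * (1 - (14 / 15 : ℝ) ^ (t / 2)) else 0 := by
    have hiff : (∀ i ∈ T, 2 * s i ≤ 2) ↔ ∀ i ∈ T, s i ≤ 1 := forall₂_congr fun i _ ↦ by omega
    have hpow : (210 * (q : ℝ) ^ 2) ^ (t / 2) * (15 * q) ^ (t % 2) =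
        (15 * q) ^ t * (14 / 15) ^ (t / 2) := by
      rw [show 210 * (q : ℝ) ^ 2 = (15 * q) ^ 2 * (14 / 15) by ring, mul_pow, ← pow_mul,
        mul_right_comm, ← pow_add, Nat.div_add_mod]
    simp only [typeCost, Pi.smul_apply, smul_eq_mul, dvd_mul_right, implies_true, if_true, hiff]
    split_ifs
    · push_cast
      rw [hpow]
      ring
    · push_cast
      ring
  have hsaving : 0 ≤ (15 * q : ℝ) ^ t * (1 - (14 / 15 : ℝ) ^ (t / 2)) :=
    mul_nonneg (by positivity) (sub_nonneg.2 (pow_le_one₀ (by norm_num) (by norm_num)))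
  have hsimple : ((#T).choose t : ℝ) ≤ #{s ∈ T.piAntidiag t | ∀ i ∈ T, s i ≤ 1} :=
    mod_cast choose_le_card_filter_piAntidiag T t
  rw [Nat.cast_sum, sum_congr rfl fun s _ ↦ hcost s, sum_sub_distrib, ← sum_filter, sum_const,
    sum_const, nsmul_eq_mul, nsmul_eq_mul, card_piAntidiag, evenLead]
  linarith [mul_le_mul_of_nonneg_right hsimple hsaving]

theorem sum_typeCost_le {q t : ℕ} (T : Finset ι) :
    ((∑ r ∈ T.piAntidiag (2 * t), typeCost q t T r : ℕ) : ℝ) ≤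
      (15 * q) ^ t * (evenLead #T t + (#T + 2 * t - 1).choose (2 * t) / (15 * q)) := by
  rw [← sum_filter_add_sum_filter_not _ fun r ↦ ∀ i ∈ T, 2 ∣ r i,
    ← map_nsmul_piAntidiag T t two_ne_zero, sum_map, Nat.cast_add, mul_add]
  refine add_le_add (sum_typeCost_two_nsmul_le q t T) ?_
  rw [← card_piAntidiag, mul_div_left_comm, Nat.cast_sum]
  have hodd : ∀ r ∈ {r ∈ T.piAntidiag (2 * t) | ¬ ∀ i ∈ T, 2 ∣ r i},
      (typeCost q t T r : ℝ) ≤ (15 * q) ^ t / (15 * q) := fun r hr ↦ by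
    rw [typeCost, if_neg (mem_filter.1 hr).2]
    exact mod_cast Nat.cast_div_le
  refine (sum_le_card_nsmul _ _ _ hodd).trans ?_
  rw [nsmul_eq_mul]
  gcongr
  exact filter_subset _ _

theorem f_two_mul_le {q : ℕ} (hq : 0 < q) (k t : ℕ) :
    (f (2 * t) (k * (15 * q)) : ℝ) ≤
      (15 * q) ^ t * (evenLead k t + (k + 2 * t - 1).choose (2 * t) / (15 * q)) := by
  let P (i : ℕ) : Finset (ℕ × ℕ) := {i} ×ˢ range (15 * q)
  have hP : Pairwise fun i j ↦ Disjoint (P i) (P j) := fun i j hij ↦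
    disjoint_product.2 (Or.inl (disjoint_singleton.2 hij))
  have hcard (i : ℕ) : #(P i) = 15 * q := by simp [P]
  have hpart := HasPartition.biUnion (pairwiseDisjoint_typeFam (range k) (2 * t)) fun r hr ↦
    hasPartition_typeFam_typeCost hP hq (fun i _ ↦ hcard i) (mem_piAntidiag.1 hr).1
  rw [← layer_biUnion hP] at hpart
  have hf := hpart.f_le (n := k * (15 * q)) (by
    rw [card_biUnion fun i _ j _ hij ↦ hP hij]
    simp [hcard])
  simpa using (Nat.cast_le.2 hf).trans (sum_typeCost_le (range k))

end EvenBound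

section Asymptotics

open Filter Topology

theorem tendsto_choose_div_pow {u : ℕ → ℕ} (hu : Tendsto u atTop atTop) {a : ℝ}
    (hua : Tendsto (fun n ↦ (u n : ℝ) / n) atTop (𝓝 a)) (t : ℕ) :
    Tendsto (fun n ↦ ((u n).choose t : ℝ) / n ^ t) atTop (𝓝 (a ^ t / t.factorial)) := by
  have hne : ∀ᶠ n : ℕ in atTop, (n : ℝ) ^ t / t.factorial ≠ 0 :=
    (eventually_gt_atTop 0).mono fun n hn ↦ by positivity
  have hchoose := ((Asymptotics.isEquivalent_iff_tendsto_one hne).1 (isEquivalent_choose t)).comp hu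
  have hlim := hchoose.mul ((hua.pow t).div_const (t.factorial : ℝ))
  rw [one_mul] at hlim
  refine hlim.congr' ?_
  filter_upwards [hu.eventually_gt_atTop 0] with n hn
  simp only [Function.comp_apply, Pi.div_apply, div_pow]
  field_simp

theorem tendsto_choose_self_div_pow (t : ℕ) :
    Tendsto (fun n : ℕ ↦ (n.choose t : ℝ) / n ^ t) atTop (𝓝 (1 / t.factorial)) := by
  have hone : Tendsto (fun n : ℕ ↦ (n : ℝ) / n) atTop (𝓝 1) :=
    tendsto_const_nhds.congr' ((eventually_gt_atTop 0).mono fun n hn ↦ by field_simp)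
  simpa only [one_pow, id] using tendsto_choose_div_pow tendsto_id hone t

theorem tendsto_evenLead_div_pow (t : ℕ) :
    Tendsto (fun k : ℕ ↦ evenLead k t / k ^ t) atTop
      (𝓝 ((14 / 15) ^ (t / 2) / t.factorial)) := by
  have htop : Tendsto (fun k : ℕ ↦ k + t - 1) atTop atTop :=
    tendsto_atTop_atTop.2 fun b ↦ ⟨b + 1, fun k hk ↦ by omega⟩
  have hratio : Tendsto (fun k : ℕ ↦ ((k + t - 1 : ℕ) : ℝ) / k) atTop (𝓝 1) := by
    have hlim := (tendsto_const_div_atTop_nhds_zero_nat ((t : ℝ) - 1)).const_add 1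
    rw [add_zero] at hlim
    refine hlim.congr' ((eventually_gt_atTop 0).mono fun k hk ↦ ?_)
    dsimp only
    rw [Nat.cast_sub (show 1 ≤ k + t by omega)]
    push_cast
    field_simp
    ring
  have hlim := (tendsto_choose_div_pow htop hratio t).sub
    ((tendsto_choose_self_div_pow t).const_mul (1 - (14 / 15 : ℝ) ^ (t / 2)))
  convert hlim using 2
  · rw [evenLead]
    ring
  · ring

theorem eventually_f_le_mul_pow {r d M : ℕ} (hM : 0 < M) {u : ℕ → ℝ} {b c : ℝ}
    (hu : Tendsto u atTop (𝓝 b)) (hf : ∀ᶠ q : ℕ in atTop, (f r (M * q) : ℝ) ≤ u q * q ^ d)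
    (hc : b / M ^ d < c) : ∀ᶠ n : ℕ in atTop, (f r n : ℝ) ≤ c * n ^ d := by
  have htop : Tendsto (fun n ↦ n / M + 1) atTop atTop :=
    (tendsto_add_atTop_nat 1).comp (Nat.tendsto_div_const_atTop hM.ne')
  have hratio : Tendsto (fun n ↦ ((n / M + 1 : ℕ) : ℝ) / n) atTop (𝓝 (1 / M)) := by
    have hfloor := (tendsto_nat_floor_mul_div_atTop (show (0 : ℝ) ≤ 1 / M by positivity)).comp
      (tendsto_natCast_atTop_atTop (R := ℝ))
    have hlim := hfloor.add (tendsto_const_div_atTop_nhds_zero_nat (1 : ℝ))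
    rw [add_zero] at hlim
    refine hlim.congr fun n ↦ ?_
    simp only [Function.comp_apply, one_div_mul_eq_div, Nat.floor_div_eq_div]
    push_cast
    ring
  have hlim := (hu.comp htop).mul (hratio.pow d)
  rw [one_div_pow, mul_one_div] at hlim
  filter_upwards [hlim.eventually_lt_const hc, htop.eventually hf, eventually_gt_atTop 0]
    with n hn hfn hn0
  have hnM : n ≤ M * (n / M + 1) := (Nat.lt_mul_div_succ n hM).le
  calc (f r n : ℝ) ≤ f r (M * (n / M + 1)) := mod_cast f_mono r hnM
    _ ≤ u (n / M + 1) * (n / M + 1 : ℕ) ^ d := hfn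
    _ = u (n / M + 1) * ((n / M + 1 : ℕ) / n) ^ d * n ^ d := by
      rw [div_pow]
      field_simp
    _ ≤ c * n ^ d := mul_le_mul_of_nonneg_right hn.le (by positivity)

theorem eventually_f_two_mul_le {t : ℕ} {c : ℝ} (hc : (14 / 15) ^ (t / 2) / t.factorial < c) :
    ∀ᶠ n : ℕ in atTop, (f (2 * t) n : ℝ) ≤ c * n ^ t := by
  obtain ⟨k, hkc, hk⟩ :=
    (((tendsto_evenLead_div_pow t).eventually_lt_const hc).and (eventually_gt_atTop 0)).exists
  have hlim : Tendsto (fun q : ℕ ↦ (15 : ℝ) ^ t *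
      (evenLead k t + (k + 2 * t - 1).choose (2 * t) / 15 / q)) atTop
      (𝓝 (15 ^ t * (evenLead k t + 0))) :=
    ((tendsto_const_div_atTop_nhds_zero_nat _).const_add _).const_mul _
  refine eventually_f_le_mul_pow (M := k * 15) (by omega) hlim ?_ ?_
  · filter_upwards [eventually_gt_atTop 0] with q hq
    convert f_two_mul_le hq k t using 1
    · rw [mul_assoc]
    · rw [mul_pow, div_div]
      ring
  · rw [add_zero, Nat.cast_mul, mul_pow, mul_comm, Nat.cast_ofNat,
      mul_div_mul_right _ _ (by positivity)]
    exact hkc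

end Asymptotics

section OddUniformity

open Filter Topology

theorem sum_antidiagonal_two_mul_add_one {M : Type*} [AddCommMonoid M] (d : ℕ) (g : ℕ × ℕ → M) :
    ∑ p ∈ antidiagonal (2 * d + 1), g p =
      ∑ p ∈ antidiagonal d, (g (2 * p.1 + 1, 2 * p.2) + g (2 * p.1, 2 * p.2 + 1)) := by
  induction d generalizing g with
  | zero => simp [Finset.Nat.sum_antidiagonal_succ, add_comm]
  | succ d ih =>
    rw [show 2 * (d + 1) + 1 = 2 * d + 1 + 1 + 1 by ring, Finset.Nat.sum_antidiagonal_succ,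
      Finset.Nat.sum_antidiagonal_succ, ih, Finset.Nat.sum_antidiagonal_succ, ← add_assoc]
    congr 1
    exact add_comm _ _

theorem f_two_mul_add_one_le (d m : ℕ) :
    f (2 * d + 1) (2 * m) ≤ 2 * ∑ p ∈ antidiagonal d, m.choose p.1 * f (2 * p.2) m := by
  have hodd (i : ℕ) : f (2 * i + 1) m ≤ m.choose i := by
    simpa [Nat.mul_add_div two_pos] using f_le_choose (2 * i + 1) m
  calc f (2 * d + 1) (2 * m)
      ≤ ∑ p ∈ antidiagonal d, (f (2 * p.1 + 1) m * f (2 * p.2) m +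
          f (2 * p.1) m * f (2 * p.2 + 1) m) := by
        rw [two_mul m]
        exact (f_add_le _ m m).trans (sum_antidiagonal_two_mul_add_one d _).le
    _ ≤ ∑ p ∈ antidiagonal d, (m.choose p.1 * f (2 * p.2) m + m.choose p.2 * f (2 * p.1) m) :=
        sum_le_sum fun p _ ↦ add_le_add (Nat.mul_le_mul_right _ (hodd _))
          ((Nat.mul_le_mul_left _ (hodd _)).trans_eq (mul_comm ..))
    _ = 2 * ∑ p ∈ antidiagonal d, m.choose p.1 * f (2 * p.2) m := by
        rw [sum_add_distrib, two_mul, ← Finset.Nat.sum_antidiagonal_swap (n := d)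
          (f := fun p ↦ m.choose p.2 * f (2 * p.1) m)]
        rfl

/-- An upper bound for the limit of `f (2 * d + 1) n / n.choose d`: twice the average of
`(14 / 15) ^ (j / 2)`, where `j` is the size of a random subset of a `d`-set. -/
noncomputable def oddDensity (d : ℕ) : ℝ :=
  2 * (∑ p ∈ antidiagonal d, d.choose p.1 * (14 / 15 : ℝ) ^ (p.2 / 2)) / 2 ^ d

theorem oddDensity_pos (d : ℕ) : 0 < oddDensity d := by
  have hsum : 0 < ∑ p ∈ antidiagonal d, (d.choose p.1 : ℝ) * (14 / 15) ^ (p.2 / 2) :=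
    sum_pos (fun p hp ↦ mul_pos
      (mod_cast Nat.choose_pos (HasAntidiagonal.antidiagonal.fst_le hp)) (by positivity))
      ⟨(0, d), by simp⟩
  unfold oddDensity
  positivity

theorem antitone_oddDensity : Antitone oddDensity := by
  refine antitone_nat_of_succ_le fun d ↦ ?_
  have hsum : ∑ p ∈ antidiagonal (d + 1), ((d + 1).choose p.1 : ℝ) * (14 / 15) ^ (p.2 / 2) ≤
      2 * ∑ p ∈ antidiagonal d, (d.choose p.1 : ℝ) * (14 / 15) ^ (p.2 / 2) := by
    rw [Finset.sum_antidiagonal_choose_succ_mul fun _ j ↦ (14 / 15 : ℝ) ^ (j / 2), two_mul]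
    refine add_le_add (sum_le_sum fun p _ ↦ ?_) (sum_congr rfl fun p hp ↦ ?_).le
    · have hdiv : p.2 / 2 ≤ (p.2 + 1) / 2 := by omega
      exact mul_le_mul_of_nonneg_left (pow_le_pow_of_le_one (by norm_num) (by norm_num) hdiv)
        (Nat.cast_nonneg _)
    · rw [Nat.choose_symm_of_eq_add (HasAntidiagonal.mem_antidiagonal.1 hp).symm]
  unfold oddDensity
  rw [pow_succ, div_le_div_iff₀ (by positivity) (by positivity)]
  have hpow : (0 : ℝ) ≤ 2 ^ d := by positivity
  linarith [mul_le_mul_of_nonneg_right hsum hpow]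

theorem oddDensity_forty_two_lt_one : oddDensity 42 < 1 := by
  rw [oddDensity, Finset.Nat.sum_antidiagonal_eq_sum_range_succ_mk]
  norm_num [sum_range_succ, Nat.choose]

theorem oddDensity_div_factorial (d : ℕ) :
    oddDensity d / d.factorial = 2 * (∑ p ∈ antidiagonal d,
      (p.1.factorial : ℝ)⁻¹ * ((14 / 15) ^ (p.2 / 2) / p.2.factorial)) / 2 ^ d := by
  rw [oddDensity, div_right_comm, mul_div_assoc, sum_div]
  congr 2
  refine sum_congr rfl fun p hp ↦ ?_
  obtain rfl := HasAntidiagonal.mem_antidiagonal.1 hp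
  rw [← Nat.add_choose_mul_factorial_mul_factorial, Nat.choose_symm_add]
  have hchoose : ((p.1 + p.2).choose p.2 : ℝ) ≠ 0 :=
    mod_cast (Nat.choose_pos (Nat.le_add_left ..)).ne'
  push_cast
  field_simp

theorem eventually_f_two_mul_add_one_le_mul_pow {d : ℕ} {c : ℝ}
    (hc : oddDensity d / d.factorial < c) :
    ∀ᶠ n : ℕ in atTop, (f (2 * d + 1) n : ℝ) ≤ c * n ^ d := by
  let b (δ : ℝ) : ℝ := 2 * ∑ p ∈ antidiagonal d,
    (p.1.factorial : ℝ)⁻¹ * ((14 / 15) ^ (p.2 / 2) / p.2.factorial + δ)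
  obtain ⟨δ, hδc, hδ⟩ : ∃ δ, b δ / 2 ^ d < c ∧ 0 < δ := by
    have hcont : Continuous fun δ ↦ b δ / 2 ^ d := by fun_prop
    have hb : b 0 / 2 ^ d = oddDensity d / d.factorial := by
      simp only [b, add_zero, oddDensity_div_factorial]
    have hlt := (hcont.tendsto' 0 _ hb).eventually_lt_const hc
    exact ((hlt.filter_mono nhdsWithin_le_nhds).and
      (self_mem_nhdsWithin (a := (0 : ℝ)) (s := Set.Ioi 0))).exists
  refine eventually_f_le_mul_pow (M := 2) two_pos (tendsto_const_nhds (x := b δ)) ?_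
    (mod_cast hδc)
  filter_upwards [(eventually_all_finset (antidiagonal d)).2 fun p _ ↦
    eventually_f_two_mul_le (lt_add_of_pos_right _ hδ)] with m hm
  calc (f (2 * d + 1) (2 * m) : ℝ)
      ≤ 2 * ∑ p ∈ antidiagonal d, (m.choose p.1 : ℝ) * f (2 * p.2) m :=
        mod_cast f_two_mul_add_one_le d m
    _ ≤ 2 * ∑ p ∈ antidiagonal d, (m ^ p.1 / p.1.factorial : ℝ) *
          (((14 / 15) ^ (p.2 / 2) / p.2.factorial + δ) * m ^ p.2) := by
        gcongr with p hp
        · exact Nat.choose_le_pow_div ..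
        · exact hm p hp
    _ = b δ * m ^ d := by
        rw [mul_assoc, sum_mul]
        congr 1
        refine sum_congr rfl fun p hp ↦ ?_
        rw [← HasAntidiagonal.mem_antidiagonal.1 hp, pow_add]
        ring

theorem eventually_f_two_mul_add_one_le {d : ℕ} {c : ℝ} (hc : oddDensity d < c) :
    ∀ᶠ n : ℕ in atTop, (f (2 * d + 1) n : ℝ) ≤ c * n.choose d := by
  have hd : (0 : ℝ) < d.factorial := by positivity
  obtain ⟨b, hb, hbc⟩ := exists_between (div_lt_div_of_pos_right hc hd)
  have hchoose := (tendsto_choose_self_div_pow d).const_mul c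
  rw [mul_one_div] at hchoose
  filter_upwards [eventually_f_two_mul_add_one_le_mul_pow hb,
    hchoose.eventually_const_lt hbc, eventually_gt_atTop 0] with n hf hn hn0
  have hpow : (0 : ℝ) < n ^ d := by positivity
  rw [mul_div_assoc', lt_div_iff₀ hpow] at hn
  exact hf.trans hn.le

end OddUniformity

theorem f_125_upper_bound_general {d : ℕ} (hd : 42 ≤ d) :
    ∃ c : ℝ, c < 1 ∧ ∀ ε : ℝ, 0 < ε → ∃ N : ℕ, ∀ n : ℕ, N ≤ n →
      (f (2 * d + 1) n : ℝ) ≤ c * (1 + ε) * (n.choose d) := by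
  refine ⟨oddDensity d, (antitone_oddDensity hd).trans_lt oddDensity_forty_two_lt_one,
    fun ε hε ↦ Filter.eventually_atTop.1 (eventually_f_two_mul_add_one_le ?_)⟩
  exact lt_mul_of_one_lt_right (oddDensity_pos d) (lt_add_of_pos_right 1 hε)

theorem f_125_upper_bound :
    ∃ c : ℝ, c < 1 ∧ ∀ ε : ℝ, 0 < ε → ∃ N : ℕ, ∀ n : ℕ, N ≤ n →
      (f 125 n : ℝ) ≤ c * (1 + ε) * (n.choose 62) :=
  f_125_upper_bound_general (d := 62) (by norm_num)
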